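/- For every κ > 0, every Schwartz function f : ℝ → ℂ, every integer ℓ ≥ 1, and all nonnegative integers σ₁, …, σ_ℓ with S = σ₁ + ⋯ + σ_ℓ, one has ∏_{i=1}^{ℓ} ‖f^{(σᵢ)}‖_{H^{-1}_κ} ≤ ‖f^{(S)}‖_{H^{-1}_κ} · ‖f‖_{H^{-1}_κ}^{ℓ−1}. -/

import Mathlib

open MeasureTheory

/-- The Fourier transform with the paper's normalization:
`f̂(ξ) = (2π)^{-1/2} ∫ e^{-iξx} f(x) dx`. -/
noncomputable def ft (f : ℝ → ℂ) (ξ : ℝ) : ℂ :=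
  (Real.sqrt (2 * Real.pi) : ℂ)⁻¹ * ∫ x : ℝ, Complex.exp (-(Complex.I * (ξ : ℂ) * (x : ℂ))) * f x

/-- The `H^{-1}_κ` norm: `‖f‖²_{H^{-1}_κ} = ∫ (ξ²+4κ²)^{-1} |f̂(ξ)|² dξ`. -/
noncomputable def HnegNorm (κ : ℝ) (g : ℝ → ℂ) : ℝ :=
  Real.sqrt (∫ ξ : ℝ, (ξ ^ 2 + 4 * κ ^ 2)⁻¹ * ‖ft g ξ‖ ^ 2)

lemma aux_schwartz (f : SchwartzMap ℝ ℂ) (n : ℕ) :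
    ∃ g : SchwartzMap ℝ ℂ, ⇑g = iteratedDeriv n ⇑f := by
  induction n with
  | zero => exact ⟨f, by simp⟩
  | succ n ih =>
    obtain ⟨g, hg⟩ := ih
    refine ⟨SchwartzMap.derivCLM ℝ ℂ g, ?_⟩
    ext x
    rw [iteratedDeriv_succ, ← hg]
    rfl

lemma aux_ft (g : ℝ → ℂ) (ξ : ℝ) :
    ft g ξ = (Real.sqrt (2 * Real.pi) : ℂ)⁻¹ *
      FourierTransform.fourier g ((2 * Real.pi)⁻¹ * ξ) := by
  unfold ft
  rw [Real.fourier_real_eq_integral_exp_smul]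
  congr 1
  apply integral_congr_ae
  refine Filter.Eventually.of_forall fun x => ?_
  simp only [smul_eq_mul]
  congr 2
  have : (Real.pi : ℂ) ≠ 0 := by exact_mod_cast Real.pi_ne_zero
  push_cast
  field_simp

lemma aux_norm (f : SchwartzMap ℝ ℂ) (n : ℕ) (ξ : ℝ) :
    ‖ft (iteratedDeriv n ⇑f) ξ‖ ^ 2 = (ξ ^ 2) ^ n * ‖ft ⇑f ξ‖ ^ 2 := by
  have h := Real.fourier_iteratedDeriv (f := ⇑f) (N := ⊤) (n := n) (f.smooth ⊤)
    (fun k _ => by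
      obtain ⟨g, hg⟩ := aux_schwartz f k
      rw [← hg]; exact g.integrable) le_top
  rw [aux_ft, aux_ft, h]
  have : (2 * (Real.pi : ℂ) * Complex.I * (((2 * Real.pi)⁻¹ * ξ : ℝ) : ℂ)) = Complex.I * ξ := by
    have : (Real.pi : ℂ) ≠ 0 := by exact_mod_cast Real.pi_ne_zero
    push_cast
    field_simp
  simp only [this, norm_mul, norm_smul, norm_pow, Complex.norm_I, one_mul, Complex.norm_real,
    Real.norm_eq_abs]
  rw [← sq_abs ξ]
  ring

lemma aux_int (κ : ℝ) (hκ : 0 < κ) (f : SchwartzMap ℝ ℂ) (n : ℕ) :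
    Integrable (fun ξ : ℝ => (ξ ^ 2) ^ n * ((ξ ^ 2 + 4 * κ ^ 2)⁻¹ * ‖ft ⇑f ξ‖ ^ 2)) := by
  obtain ⟨g, hg⟩ := aux_schwartz f n
  have h1 : Integrable (fun ξ : ℝ => ‖(FourierTransform.fourier g : SchwartzMap ℝ ℂ) ξ‖ ^ 2) :=
    MemLp.integrable_norm_pow (p := 2) ((FourierTransform.fourier g).memLp 2) two_ne_zero
  have h2 := h1.comp_mul_left' (R := (2 * Real.pi)⁻¹) (by positivity)
  have h3 := h2.const_mul (‖(Real.sqrt (2 * Real.pi) : ℂ)⁻¹‖ ^ 2)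
  have h4 : Integrable (fun ξ : ℝ => ‖ft g ξ‖ ^ 2) := by
    refine h3.congr (Filter.Eventually.of_forall fun ξ => ?_)
    simp only [aux_ft g ξ, norm_mul, mul_pow, SchwartzMap.fourier_coe]
  have h5 := h4.bdd_mul (f := fun ξ : ℝ => (ξ ^ 2 + 4 * κ ^ 2)⁻¹) (c := (4 * κ ^ 2)⁻¹)
    (by apply Measurable.aestronglyMeasurable; fun_prop)
    (Filter.Eventually.of_forall fun ξ => by
      rw [Real.norm_of_nonneg (by positivity)]
      gcongr
      nlinarith [sq_nonneg ξ])
  refine h5.congr (Filter.Eventually.of_forall fun ξ => ?_)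
  simp only [hg, aux_norm]
  ring

lemma aux_cheb (x t : ℝ) (hx : 0 ≤ x) (ht : 0 ≤ t) (m n : ℕ) :
    0 ≤ (x ^ m - t ^ m) * (x ^ n - t ^ n) := by
  rcases le_total x t with h | h
  · exact mul_nonneg_of_nonpos_of_nonpos (sub_nonpos.2 (by gcongr)) (sub_nonpos.2 (by gcongr))
  · exact mul_nonneg (sub_nonneg.2 (by gcongr)) (sub_nonneg.2 (by gcongr))

lemma aux_moment (p : ℝ → ℝ) (hp : ∀ x, 0 ≤ p x)
    (hi : ∀ n : ℕ, Integrable (fun x : ℝ => (x ^ 2) ^ n * p x)) (m n : ℕ) :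
    (∫ x : ℝ, (x ^ 2) ^ m * p x) * (∫ x : ℝ, (x ^ 2) ^ n * p x) ≤
      (∫ x : ℝ, (x ^ 2) ^ (m + n) * p x) * (∫ x : ℝ, p x) := by
  rcases Nat.eq_zero_or_pos m with rfl | hm
  · simp [mul_comm]
  have hi0 : Integrable p := by simpa using hi 0
  have h0 : 0 ≤ ∫ x, p x := integral_nonneg hp
  rcases h0.eq_or_lt with h0 | h0
  · have hz := (integral_eq_zero_iff_of_nonneg hp hi0).1 h0.symm
    have : ∫ x : ℝ, (x ^ 2) ^ m * p x = 0 := by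
      apply integral_eq_zero_of_ae
      filter_upwards [hz] with x hx
      simp [hx]
    rw [this, ← h0]; simp
  have ham : 0 ≤ ∫ x : ℝ, (x ^ 2) ^ m * p x :=
    integral_nonneg fun x => mul_nonneg (by positivity) (hp x)
  set A := ∫ x : ℝ, (x ^ 2) ^ m * p x
  set B := ∫ x : ℝ, (x ^ 2) ^ n * p x with hB
  set C := ∫ x : ℝ, p x
  obtain ⟨t, ht, htm⟩ : ∃ t : ℝ, 0 ≤ t ∧ t ^ m = A / C :=
    ⟨(A / C) ^ ((m : ℝ)⁻¹), by positivity, Real.rpow_inv_natCast_pow (by positivity) hm.ne'⟩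
  have key : 0 ≤ ∫ x : ℝ, (((x ^ 2) ^ (m + n) * p x - t ^ m * ((x ^ 2) ^ n * p x))
      - (t ^ n * ((x ^ 2) ^ m * p x) - t ^ m * t ^ n * p x)) := by
    apply integral_nonneg
    intro x
    have := mul_nonneg (aux_cheb (x ^ 2) t (sq_nonneg x) ht m n) (hp x)
    simp only [Pi.zero_apply]
    refine this.trans_eq ?_
    ring
  have j1 := (hi n).const_mul (t ^ m)
  have j2 := (hi m).const_mul (t ^ n)
  have j3 := hi0.const_mul (t ^ m * t ^ n)
  have j4 : Integrable fun x : ℝ => (x ^ 2) ^ (m + n) * p x - t ^ m * ((x ^ 2) ^ n * p x) :=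
    (hi (m + n)).sub j1
  have j5 : Integrable fun x : ℝ => t ^ n * ((x ^ 2) ^ m * p x) - t ^ m * t ^ n * p x :=
    j2.sub j3
  rw [integral_sub j4 j5, integral_sub (hi (m + n)) j1, integral_sub j2 j3,
    integral_const_mul, integral_const_mul, integral_const_mul, htm] at key
  change 0 ≤ _ - A / C * B - (t ^ n * A - A / C * t ^ n * C) at key
  have e : A / C * t ^ n * C = t ^ n * A := by field_simp
  rw [e, sub_self, sub_zero, sub_nonneg] at key
  calc A * B = (A / C * B) * C := by field_simp
    _ ≤ _ := by gcongr

lemma aux_Hneg (κ : ℝ) (f : SchwartzMap ℝ ℂ) (n : ℕ) :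
    HnegNorm κ (iteratedDeriv n ⇑f) = Real.sqrt
      (∫ ξ : ℝ, (ξ ^ 2) ^ n * ((ξ ^ 2 + 4 * κ ^ 2)⁻¹ * ‖ft ⇑f ξ‖ ^ 2)) := by
  unfold HnegNorm
  congr 2
  ext ξ
  rw [aux_norm]
  ring

lemma aux_two (κ : ℝ) (hκ : 0 < κ) (f : SchwartzMap ℝ ℂ) (m n : ℕ) :
    HnegNorm κ (iteratedDeriv m ⇑f) * HnegNorm κ (iteratedDeriv n ⇑f) ≤
      HnegNorm κ (iteratedDeriv (m + n) ⇑f) * HnegNorm κ ⇑f := by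
  have hp : ∀ ξ : ℝ, 0 ≤ (ξ ^ 2 + 4 * κ ^ 2)⁻¹ * ‖ft ⇑f ξ‖ ^ 2 := fun ξ => by positivity
  have h := aux_moment _ hp (aux_int κ hκ f) m n
  have hn : ∀ k : ℕ, 0 ≤ ∫ ξ : ℝ, (ξ ^ 2) ^ k * ((ξ ^ 2 + 4 * κ ^ 2)⁻¹ * ‖ft ⇑f ξ‖ ^ 2) :=
    fun k => integral_nonneg fun ξ => mul_nonneg (by positivity) (hp ξ)
  rw [aux_Hneg, aux_Hneg, aux_Hneg, ← Real.sqrt_mul (hn _)]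
  unfold HnegNorm
  rw [← Real.sqrt_mul (hn _)]
  exact Real.sqrt_le_sqrt h

lemma aux_all (κ : ℝ) (hκ : 0 < κ) (f : SchwartzMap ℝ ℂ) (k : ℕ) (σ : Fin (k + 1) → ℕ) :
    ∏ i, HnegNorm κ (iteratedDeriv (σ i) ⇑f) ≤
      HnegNorm κ (iteratedDeriv (∑ i, σ i) ⇑f) * HnegNorm κ ⇑f ^ k := by
  have h0 : ∀ g, 0 ≤ HnegNorm κ g := fun g => Real.sqrt_nonneg _
  induction k with
  | zero => simp
  | succ k ih =>
    rw [Fin.prod_univ_succ, Fin.sum_univ_succ]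
    calc _ ≤ HnegNorm κ (iteratedDeriv (σ 0) ⇑f) *
          (HnegNorm κ (iteratedDeriv (∑ i : Fin (k + 1), σ i.succ) ⇑f) * HnegNorm κ ⇑f ^ k) :=
          mul_le_mul_of_nonneg_left (ih fun i => σ i.succ) (h0 _)
      _ = (HnegNorm κ (iteratedDeriv (σ 0) ⇑f) *
          HnegNorm κ (iteratedDeriv (∑ i : Fin (k + 1), σ i.succ) ⇑f)) * HnegNorm κ ⇑f ^ k := by
          ring
      _ ≤ _ := mul_le_mul_of_nonneg_right (aux_two κ hκ f _ _) (pow_nonneg (h0 _) _)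
      _ = _ := by ring

/-- Hölder's inequality in Fourier variables:
`∏ᵢ ‖f^{(σᵢ)}‖_{H^{-1}_κ} ≤ ‖f^{(σ₁+⋯+σ_ℓ)}‖_{H^{-1}_κ} ‖f‖_{H^{-1}_κ}^{ℓ−1}`. -/
theorem stmt13 (κ : ℝ) (hκ : 0 < κ) (f : SchwartzMap ℝ ℂ) (ℓ : ℕ) (hℓ : 1 ≤ ℓ)
    (σ : Fin ℓ → ℕ) :
    ∏ i, HnegNorm κ (iteratedDeriv (σ i) ⇑f) ≤
      HnegNorm κ (iteratedDeriv (∑ i, σ i) ⇑f) * HnegNorm κ ⇑f ^ (ℓ - 1) := by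
  obtain ⟨k, rfl⟩ : ∃ k, ℓ = k + 1 := ⟨ℓ - 1, by omega⟩
  exact aux_all κ hκ f k σ
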